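/- Let α > 0, γ ∈ ℝ, and define ψ_V(ν,γ) = −(1/π)∫₀^∞ (1 + z²)^{−1/2}·J₀(2ν√(z² + γ²)) dz as a function of ν = √α and γ. Then ψ_V satisfies the wave equation ∂²ψ_V/∂ν∂γ + 4νγ·ψ_V = 0, assuming differentiation under the integral sign is valid. -/

import Mathlib

/-- Bessel function of the first kind of integer order `n`,
via the Bessel integral representation. -/
noncomputable def besselJ (n : ℤ) (z : ℝ) : ℝ :=
  (1 / Real.pi) * ∫ θ in (0:ℝ)..Real.pi, Real.cos (n * θ - z * Real.sin θ)

/-- The Veronis Green's function, as a function of `ν = √α` and `γ`: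
`ψ_V(ν,γ) = −(1/π)∫₀^∞ (1+z²)^{−1/2} J₀(2ν√(z²+γ²)) dz`. -/
noncomputable def psiV (ν γ : ℝ) : ℝ :=
  -(1 / Real.pi) * ∫ z in Set.Ioi (0:ℝ),
    (1 + z ^ 2) ^ (-(1:ℝ)/2) * besselJ 0 (2 * ν * Real.sqrt (z ^ 2 + γ ^ 2))

/-!
Differentiating `ψ_V` in `ν` under the integral sign turns `J₀(2νR)`, `R = √(z² + γ²)`, into
`-2R J₁(2νR)`, which grows like `√z` against a weight of size `1 / z`, so the resulting integral
does not converge absolutely. Subtracting the same integrand at `γ = 0` repairs this: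
`∂_γ (-2R J₁(2νR)) = -4νγ J₀(2νR)` because `(x J₁)' = x J₀`, so by the decay
`|J₀ x| ≤ 2 / √x` the difference is `O(1 / √z)`. The identity just used is the wave equation for
`J₀(2νR)` itself, and it passes through the integral. The remaining term, `γ = 0`, only has to be
differentiable in `ν`; the substitution `u = νz` moves `ν` from the Bessel function into the
algebraic factor `(ν² + u²)^(-1/2)`, whose `ν`-derivative is bounded by a multiple of itself.
-/

open MeasureTheory Set Filter Topology

section Bessel

lemma abs_besselJ_le_one (n : ℤ) (x : ℝ) : |besselJ n x| ≤ 1 := by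
  have h := intervalIntegral.norm_integral_le_of_norm_le_const (a := 0) (b := Real.pi)
    (f := fun θ => Real.cos (n * θ - x * Real.sin θ)) (C := 1) fun θ _ => Real.abs_cos_le_one _
  rw [one_mul, sub_zero, abs_of_pos Real.pi_pos, Real.norm_eq_abs] at h
  rw [besselJ, abs_mul, abs_of_pos (by positivity), one_div_mul_eq_div]
  exact div_le_one_of_le₀ h Real.pi_pos.le

lemma besselJ_neg_order (n : ℤ) (x : ℝ) : besselJ (-n) x = (-1) ^ n * besselJ n x := by
  have reflect (θ : ℝ) : Real.cos ((-n : ℤ) * (Real.pi - θ) - x * Real.sin (Real.pi - θ)) =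
      (-1) ^ n * Real.cos (n * θ - x * Real.sin θ) := by
    rw [← Real.cos_int_mul_pi_sub, ← Real.cos_neg, Real.sin_pi_sub]
    push_cast
    ring_nf
  have h := intervalIntegral.integral_comp_sub_left (a := 0) (b := Real.pi)
    (fun θ => Real.cos ((-n : ℤ) * θ - x * Real.sin θ)) Real.pi
  simp only [reflect, intervalIntegral.integral_const_mul, sub_self, sub_zero] at h
  rw [besselJ, besselJ, ← h]
  ring

lemma cos_int_sub_one_mul_sub (n : ℤ) (θ a : ℝ) :
    Real.cos ((n - 1 : ℤ) * θ - a) =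
      Real.cos (n * θ - a) * Real.cos θ + Real.sin (n * θ - a) * Real.sin θ := by
  rw [← Real.cos_sub]
  push_cast
  ring_nf

lemma cos_int_add_one_mul_sub (n : ℤ) (θ a : ℝ) :
    Real.cos ((n + 1 : ℤ) * θ - a) =
      Real.cos (n * θ - a) * Real.cos θ - Real.sin (n * θ - a) * Real.sin θ := by
  rw [← Real.cos_add]
  push_cast
  ring_nf

lemma mul_besselJ_sub_one_add_besselJ_add_one (n : ℤ) (x : ℝ) :
    x * (besselJ (n - 1) x + besselJ (n + 1) x) = 2 * n * besselJ n x := by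
  have primitive (θ : ℝ) : HasDerivAt (fun θ => Real.sin (n * θ - x * Real.sin θ))
      (n * Real.cos (n * θ - x * Real.sin θ) -
        x / 2 * (Real.cos ((n - 1 : ℤ) * θ - x * Real.sin θ) +
          Real.cos ((n + 1 : ℤ) * θ - x * Real.sin θ))) θ := by
    refine (((hasDerivAt_id θ).const_mul (n : ℝ)).sub
      ((Real.hasDerivAt_sin θ).const_mul x)).sin.congr_deriv ?_
    rw [cos_int_sub_one_mul_sub, cos_int_add_one_mul_sub]
    simp only [id, Pi.sub_apply]
    ring
  have h := intervalIntegral.integral_eq_sub_of_hasDerivAt (a := 0) (b := Real.pi)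
    (fun θ _ => primitive θ) ((by fun_prop : Continuous _).intervalIntegrable _ _)
  rw [intervalIntegral.integral_sub, intervalIntegral.integral_const_mul,
    intervalIntegral.integral_const_mul, intervalIntegral.integral_add] at h
  · simp only [Real.sin_pi, mul_zero, sub_zero, Real.sin_zero, Real.sin_int_mul_pi] at h
    simp only [besselJ]
    linear_combination (-2 / Real.pi) * h
  all_goals exact (by fun_prop : Continuous _).intervalIntegrable _ _

lemma hasDerivAt_besselJ (n : ℤ) (x : ℝ) :
    HasDerivAt (besselJ n) ((besselJ (n - 1) x - besselJ (n + 1) x) / 2) x := by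
  have h := (intervalIntegral.hasDerivAt_integral_of_dominated_loc_of_deriv_le
    (a := 0) (b := Real.pi) (μ := volume) (x₀ := x)
    (F := fun x θ => Real.cos (n * θ - x * Real.sin θ))
    (F' := fun x θ => Real.sin θ * Real.sin (n * θ - x * Real.sin θ))
    (bound := fun _ => 1) univ_mem
    (.of_forall fun y => (by fun_prop : Continuous _).aestronglyMeasurable)
    ((by fun_prop : Continuous _).intervalIntegrable _ _)
    (by fun_prop : Continuous _).aestronglyMeasurable
    (.of_forall fun θ _ y _ => by
      rw [norm_mul]
      exact mul_le_one₀ (Real.abs_sin_le_one _) (norm_nonneg _) (Real.abs_sin_le_one _))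
    intervalIntegrable_const
    (.of_forall fun θ _ y _ => by
      refine (((hasDerivAt_id y).mul_const (Real.sin θ)).const_sub (n * θ)).cos.congr_deriv ?_
      simp only [id]; ring)).2.const_mul (1 / Real.pi)
  refine h.congr_deriv ?_
  have product_to_sum (θ : ℝ) : Real.sin θ * Real.sin (n * θ - x * Real.sin θ) =
      (Real.cos ((n - 1 : ℤ) * θ - x * Real.sin θ) -
        Real.cos ((n + 1 : ℤ) * θ - x * Real.sin θ)) / 2 := by
    rw [cos_int_sub_one_mul_sub, cos_int_add_one_mul_sub]
    ring
  simp only [product_to_sum, besselJ, intervalIntegral.integral_div]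
  rw [intervalIntegral.integral_sub]
  · ring
  all_goals exact (by fun_prop : Continuous _).intervalIntegrable _ _

@[fun_prop]
lemma continuous_besselJ (n : ℤ) : Continuous (besselJ n) :=
  continuous_iff_continuousAt.2 fun x => (hasDerivAt_besselJ n x).continuousAt

lemma hasDerivAt_besselJ_of_ne_zero (n : ℤ) {x : ℝ} (hx : x ≠ 0) :
    HasDerivAt (besselJ n) (besselJ (n - 1) x - n / x * besselJ n x) x := by
  refine (hasDerivAt_besselJ n x).congr_deriv ?_
  have recurrence := mul_besselJ_sub_one_add_besselJ_add_one n x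
  field_simp
  linear_combination -recurrence

lemma hasDerivAt_besselJ_zero (x : ℝ) : HasDerivAt (besselJ 0) (-besselJ 1 x) x := by
  have h := hasDerivAt_besselJ 0 x
  rw [zero_sub, zero_add, besselJ_neg_order] at h
  exact h.congr_deriv (by ring)

lemma hasDerivAt_mul_besselJ_one (c x : ℝ) :
    HasDerivAt (fun x => x * besselJ 1 (c * x)) (c * x * besselJ 0 (c * x)) x := by
  refine ((hasDerivAt_id x).mul
    ((hasDerivAt_besselJ 1 (c * x)).comp x ((hasDerivAt_id x).const_mul c))).congr_deriv ?_
  have recurrence := mul_besselJ_sub_one_add_besselJ_add_one 1 (c * x)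
  simp only [sub_self, Int.reduceAdd, Int.cast_one, Function.comp_apply, id_eq] at recurrence ⊢
  linear_combination (-1 / 2) * recurrence

/-- The energy `y'² + (1 + 1 / (4x²)) y²` of `y = √x J₀(x)`, which solves
`y'' + (1 + 1 / (4x²)) y = 0`. Being nonincreasing, it yields the decay of `J₀`. -/
noncomputable def besselEnergy (x : ℝ) : ℝ :=
  x * (besselJ 0 x ^ 2 + besselJ 1 x ^ 2) - besselJ 0 x * besselJ 1 x + besselJ 0 x ^ 2 / (2 * x)

lemma hasDerivAt_besselEnergy {x : ℝ} (hx : x ≠ 0) :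
    HasDerivAt besselEnergy (-(besselJ 0 x ^ 2 / (2 * x ^ 2))) x := by
  have h₀ := hasDerivAt_besselJ_zero x
  have h₁ := hasDerivAt_besselJ_of_ne_zero 1 hx
  refine ((((hasDerivAt_id x).mul ((h₀.pow 2).add (h₁.pow 2))).sub (h₀.mul h₁)).add
    ((h₀.pow 2).div ((hasDerivAt_id x).const_mul 2)
      (mul_ne_zero two_ne_zero hx))).congr_deriv ?_
  simp only [Pi.add_apply, Pi.pow_apply, id_eq, Nat.cast_ofNat, Nat.add_one_sub_one, pow_one,
    sub_self, Int.cast_one, mul_one]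
  field_simp
  ring

lemma antitoneOn_besselEnergy : AntitoneOn besselEnergy (Ioi 0) := by
  have deriv_at {x : ℝ} (hx : x ∈ Ioi (0 : ℝ)) := hasDerivAt_besselEnergy (ne_of_gt hx)
  refine antitoneOn_of_hasDerivWithinAt_nonpos (convex_Ioi 0)
    (fun x hx => (deriv_at hx).continuousAt.continuousWithinAt)
    (fun x hx => (deriv_at (interior_subset hx)).hasDerivWithinAt) fun x _ => ?_
  exact neg_nonpos.2 (by positivity)

lemma mul_besselJ_zero_sq_le_besselEnergy {x : ℝ} (hx : 0 < x) :
    x * besselJ 0 x ^ 2 ≤ besselEnergy x := by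
  have gap : besselEnergy x - x * besselJ 0 x ^ 2 =
      ((2 * x * besselJ 1 x - besselJ 0 x) ^ 2 + besselJ 0 x ^ 2) / (4 * x) := by
    rw [besselEnergy]
    field_simp
    ring
  exact sub_nonneg.1 (gap ▸ by positivity)

lemma besselEnergy_one_le : besselEnergy 1 ≤ 4 := by
  have h₀ := abs_le.1 (abs_besselJ_le_one 0 1)
  have h₁ := abs_le.1 (abs_besselJ_le_one 1 1)
  rw [besselEnergy]
  nlinarith

lemma abs_besselJ_zero_le {x : ℝ} (hx : 0 < x) : |besselJ 0 x| ≤ 2 / √x := by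
  have key : x * besselJ 0 x ^ 2 ≤ 2 ^ 2 := by
    rcases le_total x 1 with h | h
    · have := (sq_le_one_iff_abs_le_one _).2 (abs_besselJ_le_one 0 x)
      nlinarith
    · calc x * besselJ 0 x ^ 2 ≤ besselEnergy x := mul_besselJ_zero_sq_le_besselEnergy hx
        _ ≤ besselEnergy 1 := antitoneOn_besselEnergy (mem_Ioi.2 one_pos) hx h
        _ ≤ 2 ^ 2 := besselEnergy_one_le.trans (by norm_num)
  rw [le_div_iff₀ (Real.sqrt_pos.2 hx)]
  refine abs_le_of_sq_le_sq' ?_ zero_le_two |>.2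
  rwa [mul_pow, sq_abs, Real.sq_sqrt hx.le, mul_comm]

end Bessel

section Kernel

/-- The kernel `J₀(2ν√(z² + γ²))` which `ψ_V` integrates against `(1 + z²)^(-1/2)`. -/
noncomputable def veronisKernel (ν γ z : ℝ) : ℝ :=
  besselJ 0 (2 * ν * √(z ^ 2 + γ ^ 2))

/-- The derivative `-2R J₁(2νR)`, `R = √(z² + γ²)`, of `veronisKernel ν γ z` in `ν`. -/
noncomputable def veronisKernelDeriv (ν γ z : ℝ) : ℝ :=
  -(2 * (√(z ^ 2 + γ ^ 2) * besselJ 1 (2 * ν * √(z ^ 2 + γ ^ 2))))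

lemma continuous_veronisKernel (ν γ : ℝ) : Continuous (veronisKernel ν γ) := by
  unfold veronisKernel
  fun_prop

lemma continuous_veronisKernelDeriv (ν γ : ℝ) : Continuous (veronisKernelDeriv ν γ) := by
  unfold veronisKernelDeriv
  fun_prop

lemma veronisKernel_eq_veronisKernel_one {ν : ℝ} (hν : 0 ≤ ν) (γ z : ℝ) :
    veronisKernel ν γ z = veronisKernel 1 (ν * γ) (ν * z) := by
  have scale : √((ν * z) ^ 2 + (ν * γ) ^ 2) = ν * √(z ^ 2 + γ ^ 2) := by
    rw [mul_pow, mul_pow, ← mul_add, Real.sqrt_mul (sq_nonneg ν), Real.sqrt_sq hν]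
  rw [veronisKernel, veronisKernel, scale, mul_one, mul_assoc]

lemma hasDerivAt_veronisKernel (ν γ z : ℝ) :
    HasDerivAt (fun ν' => veronisKernel ν' γ z) (veronisKernelDeriv ν γ z) ν := by
  refine ((hasDerivAt_besselJ_zero _).comp ν
    (((hasDerivAt_id ν).const_mul 2).mul_const √(z ^ 2 + γ ^ 2))).congr_deriv ?_
  rw [veronisKernelDeriv]
  simp only [id]
  ring

lemma hasDerivAt_veronisKernelDeriv (ν γ : ℝ) {z : ℝ} (hz : z ≠ 0) :
    HasDerivAt (fun γ' => veronisKernelDeriv ν γ' z) (-(4 * ν * γ) * veronisKernel ν γ z) γ := by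
  have hR : √(z ^ 2 + γ ^ 2) ≠ 0 := by positivity
  have radius := ((hasDerivAt_pow 2 γ).const_add (z ^ 2)).sqrt (by positivity)
  refine (((hasDerivAt_mul_besselJ_one (2 * ν) _).comp γ radius).const_mul 2).neg.congr_deriv ?_
  rw [veronisKernel]
  field_simp
  ring

lemma abs_veronisKernel_le {ν : ℝ} (hν : 0 < ν) (γ : ℝ) {z : ℝ} (hz : 0 < z) :
    |veronisKernel ν γ z| ≤ 2 / √ν / √z := by
  have hR : z ≤ √(z ^ 2 + γ ^ 2) := Real.le_sqrt_of_sq_le (by nlinarith)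
  have hνz : ν * z ≤ 2 * ν * √(z ^ 2 + γ ^ 2) := by nlinarith
  calc |veronisKernel ν γ z| ≤ 2 / √(2 * ν * √(z ^ 2 + γ ^ 2)) :=
        abs_besselJ_zero_le ((mul_pos hν hz).trans_le hνz)
    _ ≤ 2 / √(ν * z) := by gcongr
    _ = 2 / √ν / √z := by rw [Real.sqrt_mul hν.le, div_div]

lemma abs_mul_veronisKernel_le {ν : ℝ} (hν : 0 < ν) (γ : ℝ) {z : ℝ} (hz : 0 < z) :
    |-(4 * ν * γ) * veronisKernel ν γ z| ≤ 8 * √ν * |γ| / √z := by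
  calc |-(4 * ν * γ) * veronisKernel ν γ z| = 4 * ν * |γ| * |veronisKernel ν γ z| := by
        rw [abs_mul, abs_neg, abs_mul, abs_of_pos (by positivity : 0 < 4 * ν)]
    _ ≤ 4 * ν * |γ| * (2 / √ν / √z) := by gcongr; exact abs_veronisKernel_le hν γ hz
    _ = 8 * (ν / √ν) * |γ| / √z := by ring
    _ = 8 * √ν * |γ| / √z := by rw [Real.div_sqrt]

lemma abs_veronisKernelDeriv_sub_le {ν : ℝ} (hν : 0 < ν) (γ : ℝ) {z : ℝ} (hz : 0 < z) :
    |veronisKernelDeriv ν γ z - veronisKernelDeriv ν 0 z| ≤ 8 * √ν * γ ^ 2 / √z := by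
  have h := (convex_uIcc 0 γ).norm_image_sub_le_of_norm_hasDerivWithin_le
    (C := 8 * √ν * |γ| / √z)
    (fun γ' _ => (hasDerivAt_veronisKernelDeriv ν γ' hz.ne').hasDerivWithinAt)
    (fun γ' hγ' => (abs_mul_veronisKernel_le hν γ' hz).trans <| by
      have : |γ'| ≤ |γ| := by simpa only [sub_zero] using abs_sub_left_of_mem_uIcc hγ'
      gcongr)
    left_mem_uIcc right_mem_uIcc
  rw [Real.norm_eq_abs, Real.norm_eq_abs, sub_zero] at h
  refine h.trans_eq ?_
  rw [← sq_abs γ]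
  ring

end Kernel

section WeightedIntegral

variable {w : ℝ → ℝ} (hw : IntegrableOn (fun z => w z / √z) (Ioi 0))
include hw

lemma integrableOn_mul_of_abs_le_div_sqrt {f : ℝ → ℝ} (hf : Continuous f) {K : ℝ}
    (hK : ∀ z > 0, |f z| ≤ K / √z) : IntegrableOn (fun z => w z * f z) (Ioi 0) := by
  have bounded : ∀ᵐ z ∂volume.restrict (Ioi (0 : ℝ)), ‖√z * f z‖ ≤ K :=
    ae_restrict_of_forall_mem measurableSet_Ioi fun z hz => by
      rw [norm_mul, Real.norm_of_nonneg (Real.sqrt_nonneg z), mul_comm]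
      exact (le_div_iff₀ (Real.sqrt_pos.2 hz)).1 (hK z hz)
  refine (hw.mul_bdd (by fun_prop : Continuous _).aestronglyMeasurable bounded).congr ?_
  refine ae_restrict_of_forall_mem measurableSet_Ioi fun z hz => ?_
  have : √z ≠ 0 := (Real.sqrt_pos.2 hz).ne'
  field_simp

lemma aestronglyMeasurable_of_integrableOn_div_sqrt :
    AEStronglyMeasurable w (volume.restrict (Ioi 0)) := by
  refine (hw.aestronglyMeasurable.mul
    Real.continuous_sqrt.aestronglyMeasurable).congr ?_
  exact ae_restrict_of_forall_mem measurableSet_Ioi fun z hz =>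
    div_mul_cancel₀ _ (Real.sqrt_pos.2 hz).ne'

lemma hasDerivAt_integral_mul_of_abs_le_div_sqrt {F F' : ℝ → ℝ → ℝ} {x₀ K₀ K : ℝ} {s : Set ℝ}
    (hs : s ∈ 𝓝 x₀) (hF : ∀ x, Continuous (F x)) (hF' : Continuous (F' x₀))
    (hK₀ : ∀ z > 0, |F x₀ z| ≤ K₀ / √z) (hK : ∀ x ∈ s, ∀ z > 0, |F' x z| ≤ K / √z)
    (hderiv : ∀ x ∈ s, ∀ z > 0, HasDerivAt (fun x => F x z) (F' x z) x) :
    HasDerivAt (fun x => ∫ z in Ioi 0, w z * F x z) (∫ z in Ioi 0, w z * F' x₀ z) x₀ := by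
  have hwm := aestronglyMeasurable_of_integrableOn_div_sqrt hw
  refine (hasDerivAt_integral_of_dominated_loc_of_deriv_le (F' := fun x z => w z * F' x z)
    (bound := fun z => K * ‖w z / √z‖) hs
    (.of_forall fun x => hwm.mul (hF x).aestronglyMeasurable)
    (integrableOn_mul_of_abs_le_div_sqrt hw (hF x₀) hK₀) (hwm.mul hF'.aestronglyMeasurable)
    (ae_restrict_of_forall_mem measurableSet_Ioi fun z hz x hx => ?_) (hw.norm.const_mul K)
    (ae_restrict_of_forall_mem measurableSet_Ioi fun z hz x hx =>
      (hderiv x hx z hz).const_mul (w z))).2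
  calc ‖w z * F' x z‖ ≤ ‖w z‖ * (K / √z) := by
        rw [norm_mul]; gcongr; exact hK x hx z hz
    _ = K * ‖w z / √z‖ := by
        rw [norm_div, Real.norm_of_nonneg (Real.sqrt_nonneg z)]; ring

lemma integrableOn_mul_veronisKernel {ν : ℝ} (hν : 0 < ν) (γ : ℝ) :
    IntegrableOn (fun z => w z * veronisKernel ν γ z) (Ioi 0) :=
  integrableOn_mul_of_abs_le_div_sqrt hw (continuous_veronisKernel ν γ)
    fun _ hz => abs_veronisKernel_le hν γ hz

lemma hasDerivAt_integral_veronisKernel_sub {ν : ℝ} (hν : 0 < ν) (γ : ℝ) :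
    HasDerivAt (fun ν' => ∫ z in Ioi 0, w z * (veronisKernel ν' γ z - veronisKernel ν' 0 z))
      (∫ z in Ioi 0, w z * (veronisKernelDeriv ν γ z - veronisKernelDeriv ν 0 z)) ν := by
  refine hasDerivAt_integral_mul_of_abs_le_div_sqrt hw
    (F' := fun ν' z => veronisKernelDeriv ν' γ z - veronisKernelDeriv ν' 0 z)
    (s := Ioo 0 (2 * ν)) (K₀ := 2 / √ν + 2 / √ν) (K := 8 * √(2 * ν) * γ ^ 2)
    (Ioo_mem_nhds hν (by linarith))
    (fun ν' => (continuous_veronisKernel ν' γ).sub (continuous_veronisKernel ν' 0))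
    ((continuous_veronisKernelDeriv ν γ).sub (continuous_veronisKernelDeriv ν 0))
    (fun z hz => ?_) (fun ν' hν' z hz => ?_)
    fun ν' _ z _ => (hasDerivAt_veronisKernel ν' γ z).sub (hasDerivAt_veronisKernel ν' 0 z)
  · rw [add_div]
    exact (abs_sub _ _).trans
      (add_le_add (abs_veronisKernel_le hν γ hz) (abs_veronisKernel_le hν 0 hz))
  · refine (abs_veronisKernelDeriv_sub_le hν'.1 γ hz).trans ?_
    have := hν'.2.le
    gcongr

lemma hasDerivAt_integral_veronisKernelDeriv_sub {ν : ℝ} (hν : 0 < ν) (γ : ℝ) :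
    HasDerivAt
      (fun γ' => ∫ z in Ioi 0, w z * (veronisKernelDeriv ν γ' z - veronisKernelDeriv ν 0 z))
      (-(4 * ν * γ) * ∫ z in Ioi 0, w z * veronisKernel ν γ z) γ := by
  have h := hasDerivAt_integral_mul_of_abs_le_div_sqrt hw (x₀ := γ)
    (F := fun γ' z => veronisKernelDeriv ν γ' z - veronisKernelDeriv ν 0 z)
    (F' := fun γ' z => -(4 * ν * γ') * veronisKernel ν γ' z)
    (s := {γ' | |γ'| < |γ| + 1}) (K := 8 * √ν * (|γ| + 1))
    (continuous_abs.continuousAt.eventually_lt_const (lt_add_one |γ|))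
    (fun γ' => (continuous_veronisKernelDeriv ν γ').sub (continuous_veronisKernelDeriv ν 0))
    ((continuous_veronisKernel ν γ).const_mul _)
    (fun z hz => abs_veronisKernelDeriv_sub_le hν γ hz)
    (fun γ' hγ' z hz => (abs_mul_veronisKernel_le hν γ' hz).trans <| by
      have : |γ'| ≤ |γ| + 1 := le_of_lt hγ'
      gcongr)
    fun γ' _ z hz => (hasDerivAt_veronisKernelDeriv ν γ' (ne_of_gt hz)).sub_const _
  refine h.congr_deriv ?_
  simp_rw [mul_left_comm (w _), integral_const_mul]

theorem hasDerivAt_deriv_integral_mul_veronisKernel {ν : ℝ} (hν : 0 < ν) (γ : ℝ)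
    (hd : DifferentiableAt ℝ (fun ν' => ∫ z in Ioi 0, w z * veronisKernel ν' 0 z) ν) :
    HasDerivAt (fun γ' => deriv (fun ν' => ∫ z in Ioi 0, w z * veronisKernel ν' γ' z) ν)
      (-(4 * ν * γ) * ∫ z in Ioi 0, w z * veronisKernel ν γ z) γ := by
  have deriv_nu (γ' : ℝ) : deriv (fun ν' => ∫ z in Ioi 0, w z * veronisKernel ν' γ' z) ν =
      deriv (fun ν' => ∫ z in Ioi 0, w z * veronisKernel ν' 0 z) ν +
        ∫ z in Ioi 0, w z * (veronisKernelDeriv ν γ' z - veronisKernelDeriv ν 0 z) := by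
    refine ((hd.hasDerivAt.add
      (hasDerivAt_integral_veronisKernel_sub hw hν γ')).congr_of_eventuallyEq ?_).deriv
    filter_upwards [Ioi_mem_nhds hν] with ν' hν'
    simp only [Pi.add_apply, mul_sub]
    rw [integral_sub (integrableOn_mul_veronisKernel hw hν' γ')
      (integrableOn_mul_veronisKernel hw hν' 0), add_sub_cancel]
  rw [funext deriv_nu]
  exact (hasDerivAt_integral_veronisKernelDeriv_sub hw hν γ).const_add _

end WeightedIntegral

section Scaling

lemma abs_deriv_inv_sqrt_sq_add_sq_le {ν₀ ν : ℝ} (hν₀ : 0 < ν₀) (hν : ν₀ / 2 < ν) (u : ℝ) :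
    |-(ν / √(ν ^ 2 + u ^ 2) ^ 3)| ≤ 4 / ν₀ * (√(ν₀ ^ 2 + u ^ 2))⁻¹ := by
  have hν_pos : 0 < ν := (half_pos hν₀).trans hν
  set r := √(ν ^ 2 + u ^ 2)
  have : 0 < r := by positivity
  have hνr : ν ≤ r := Real.le_sqrt_of_sq_le (by nlinarith)
  have hr₀ : √(ν₀ ^ 2 + u ^ 2) ≤ 2 * r := by
    refine Real.sqrt_le_iff.2 ⟨by positivity, ?_⟩
    rw [mul_pow, Real.sq_sqrt (by positivity)]
    nlinarith
  rw [abs_neg, abs_of_pos (by positivity), ← div_eq_mul_inv, div_div,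
    div_le_div_iff₀ (by positivity) (by positivity)]
  calc ν * (ν₀ * √(ν₀ ^ 2 + u ^ 2)) ≤ r * (2 * r * (2 * r)) := by gcongr; linarith
    _ = 4 * r ^ 3 := by ring

lemma hasDerivAt_inv_sqrt_sq_add_sq {ν : ℝ} (hν : ν ≠ 0) (u : ℝ) :
    HasDerivAt (fun ν' => (√(ν' ^ 2 + u ^ 2))⁻¹) (-(ν / √(ν ^ 2 + u ^ 2) ^ 3)) ν := by
  have hr : √(ν ^ 2 + u ^ 2) ≠ 0 := by positivity
  refine ((((hasDerivAt_pow 2 ν).add_const (u ^ 2)).sqrt (by positivity)).inv hr).congr_deriv ?_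
  field_simp
  norm_num

lemma differentiableAt_integral_inv_sqrt_sq_add_sq_mul {μ : Measure ℝ} {f : ℝ → ℝ} {ν₀ : ℝ}
    (hν₀ : 0 < ν₀) (hf : Integrable (fun u => (√(ν₀ ^ 2 + u ^ 2))⁻¹ * f u) μ) :
    DifferentiableAt ℝ (fun ν => ∫ u, (√(ν ^ 2 + u ^ 2))⁻¹ * f u ∂μ) ν₀ := by
  have hfm : AEStronglyMeasurable f μ := by
    have h := (by fun_prop : Continuous fun u : ℝ => √(ν₀ ^ 2 + u ^ 2)).aestronglyMeasurable.mul
      hf.aestronglyMeasurable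
    refine h.congr (.of_forall fun u => ?_)
    exact mul_inv_cancel_left₀ (by positivity) (f u)
  refine (hasDerivAt_integral_of_dominated_loc_of_deriv_le
    (F' := fun ν u => -(ν / √(ν ^ 2 + u ^ 2) ^ 3) * f u)
    (bound := fun u => 4 / ν₀ * ‖(√(ν₀ ^ 2 + u ^ 2))⁻¹ * f u‖)
    (Ioi_mem_nhds (half_lt_self hν₀))
    (.of_forall fun ν => .mul (by fun_prop : Measurable _).aestronglyMeasurable hfm) hf
    (.mul (by fun_prop : Measurable _).aestronglyMeasurable hfm)
    (.of_forall fun u ν hν => ?_) (hf.norm.const_mul _)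
    (.of_forall fun u ν hν => ?_)).2.differentiableAt
  · rw [norm_mul, norm_mul, ← mul_assoc, Real.norm_of_nonneg (by positivity : 0 ≤ (√_)⁻¹)]
    gcongr
    exact abs_deriv_inv_sqrt_sq_add_sq_le hν₀ hν u
  · exact (hasDerivAt_inv_sqrt_sq_add_sq ((half_pos hν₀).trans hν).ne' u).mul_const _

lemma one_add_sq_rpow_neg_half_eq_mul {ν : ℝ} (hν : 0 < ν) (z : ℝ) :
    (1 + z ^ 2) ^ (-(1 : ℝ) / 2) = ν * (√(ν ^ 2 + (ν * z) ^ 2))⁻¹ := by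
  have factor : ν ^ 2 + (ν * z) ^ 2 = ν ^ 2 * (1 + z ^ 2) := by ring
  rw [factor, Real.sqrt_mul (sq_nonneg ν), Real.sqrt_sq hν.le, mul_inv,
    mul_inv_cancel_left₀ hν.ne', neg_div, Real.rpow_neg (by positivity), Real.sqrt_eq_rpow]

lemma integral_one_add_sq_rpow_neg_half_mul_comp_mul_left (f : ℝ → ℝ) {ν : ℝ} (hν : 0 < ν) :
    ∫ z in Ioi 0, (1 + z ^ 2) ^ (-(1 : ℝ) / 2) * f (ν * z) =
      ∫ u in Ioi 0, (√(ν ^ 2 + u ^ 2))⁻¹ * f u := by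
  have substitution :=
    integral_comp_mul_left_Ioi' (fun u => (√(ν ^ 2 + u ^ 2))⁻¹ * f u) 0 hν
  rw [mul_zero] at substitution
  simp_rw [← substitution, smul_eq_mul, ← integral_const_mul, ← mul_assoc,
    ← one_add_sq_rpow_neg_half_eq_mul hν]

lemma integrableOn_inv_sqrt_sq_add_sq_mul (f : ℝ → ℝ) {ν : ℝ} (hν : 0 < ν)
    (hf : IntegrableOn (fun z => (1 + z ^ 2) ^ (-(1 : ℝ) / 2) * f (ν * z)) (Ioi 0)) :
    IntegrableOn (fun u => (√(ν ^ 2 + u ^ 2))⁻¹ * f u) (Ioi 0) := by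
  rw [← mul_zero ν, ← integrableOn_Ioi_comp_mul_left_iff _ _ hν]
  simp_rw [one_add_sq_rpow_neg_half_eq_mul hν, mul_assoc] at hf
  exact (integrable_const_mul_iff hν.ne'.isUnit _).1 hf

end Scaling

section VeronisWeight

lemma integrableOn_one_add_sq_rpow_neg_half_div_sqrt :
    IntegrableOn (fun z : ℝ => (1 + z ^ 2) ^ (-(1 : ℝ) / 2) / √z) (Ioi 0) := by
  have hcont : Continuous fun z : ℝ => (1 + z ^ 2) ^ (-(1 : ℝ) / 2) :=
    (by fun_prop : Continuous fun z : ℝ => 1 + z ^ 2).rpow_const fun z => .inl (by positivity)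
  have htop : (fun z : ℝ => (1 + z ^ 2) ^ (-(1 : ℝ) / 2)) =O[atTop] (· ^ (-(1 : ℝ))) := by
    refine .of_bound' ?_
    filter_upwards [eventually_gt_atTop 0] with z hz
    rw [Real.norm_of_nonneg (by positivity), Real.norm_of_nonneg (by positivity)]
    calc (1 + z ^ 2) ^ (-(1 : ℝ) / 2) ≤ (z ^ 2) ^ (-(1 : ℝ) / 2) :=
          Real.rpow_le_rpow_of_nonpos (by positivity) (by linarith) (by norm_num)
      _ = z ^ (-(1 : ℝ)) := by
          rw [← Real.rpow_natCast_mul hz.le]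
          norm_num
  have hzero : (fun z : ℝ => (1 + z ^ 2) ^ (-(1 : ℝ) / 2)) =O[𝓝[>] 0] (· ^ (-(0 : ℝ))) := by
    simp only [neg_zero, Real.rpow_zero]
    exact (hcont.tendsto 0).isBigO_one ℝ |>.mono nhdsWithin_le_nhds
  refine (mellin_convergent_of_isBigO_scalar (s := 1 / 2)
    (hcont.locallyIntegrable.locallyIntegrableOn _)
    htop (by norm_num) hzero (by norm_num)).congr_fun (fun z hz => ?_) measurableSet_Ioi
  have exponent : (1 / 2 - 1 : ℝ) = -(1 / 2) := by norm_num
  beta_reduce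
  rw [exponent, Real.rpow_neg (le_of_lt hz), ← Real.sqrt_eq_rpow, inv_mul_eq_div]

lemma differentiableAt_integral_one_add_sq_rpow_neg_half_mul_veronisKernel_zero {ν : ℝ}
    (hν : 0 < ν) : DifferentiableAt ℝ
      (fun ν' => ∫ z in Ioi 0, (1 + z ^ 2) ^ (-(1 : ℝ) / 2) * veronisKernel ν' 0 z) ν := by
  have rescale {ν' : ℝ} (hν' : 0 < ν') :
      veronisKernel ν' 0 = fun z => veronisKernel 1 0 (ν' * z) := by
    ext z
    rw [veronisKernel_eq_veronisKernel_one hν'.le, mul_zero]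
  have integrable := integrableOn_mul_veronisKernel
    integrableOn_one_add_sq_rpow_neg_half_div_sqrt hν 0
  rw [rescale hν] at integrable
  refine (differentiableAt_integral_inv_sqrt_sq_add_sq_mul hν
    (integrableOn_inv_sqrt_sq_add_sq_mul _ hν integrable)).congr_of_eventuallyEq ?_
  filter_upwards [Ioi_mem_nhds hν] with ν' hν'
  rw [rescale hν', integral_one_add_sq_rpow_neg_half_mul_comp_mul_left _ hν']

theorem hasDerivAt_deriv_psiV {ν : ℝ} (hν : 0 < ν) (γ : ℝ) :
    HasDerivAt (fun γ' => deriv (fun ν' => psiV ν' γ') ν) (-(4 * ν * γ) * psiV ν γ) γ := by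
  have h := (hasDerivAt_deriv_integral_mul_veronisKernel
    integrableOn_one_add_sq_rpow_neg_half_div_sqrt hν γ
    (differentiableAt_integral_one_add_sq_rpow_neg_half_mul_veronisKernel_zero hν)).const_mul
      (-(1 / Real.pi))
  simp_rw [← deriv_const_mul_field] at h
  exact h.congr_deriv (mul_left_comm _ _ _)

end VeronisWeight

/-- `ψ_V` satisfies the wave equation `∂²ψ_V/∂ν∂γ + 4νγ ψ_V = 0`
(for `ν = √α` with `α > 0`). -/
theorem stmt15 (α γ : ℝ) (hα : 0 < α) :
    deriv (fun γ' => deriv (fun ν' => psiV ν' γ') (Real.sqrt α)) γ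
      + 4 * Real.sqrt α * γ * psiV (Real.sqrt α) γ = 0 := by
  rw [(hasDerivAt_deriv_psiV (Real.sqrt_pos.2 hα) γ).deriv]
  ring
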